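/- arXiv:1809.06921 — 2 statements merged into one kernel-verified Lean document; each statement's English description precedes it below -/
import Mathlib

section
/- Let f be a q-periodic arithmetical function with ∑_{a=1}^q f(a) = 0. Then the derivative at s = 0 of L(s,f) = q^{-s} ∑_{a=1}^q f(a) ζ(s,a/q) satisfies L'(0,f) = (log q / q) · ∑_{a=1}^q a f(a) + ∑_{a=1}^q f(a) log Γ(a/q). -/
open Finset Filter Topology HurwitzZeta

/-!
For `re s > 1`, shifting the series of `ζ(s,x)` and `ζ(s)` gives
`ζ(s,x) - ζ(s) = x⁻ˢ - x + ∑_{k ≥ 1} ((k + x)⁻ˢ - (1 - x) k⁻ˢ - x (k + 1)⁻ˢ)`.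
The summands are errors of linear interpolation of `t ↦ t⁻ˢ` on `[k, k + 1]`, so they are
`O(k ^ (-re s - 2))` and the identity persists for `re s > -1`. At `s = 0` every summand vanishes,
whence `ζ(0,x) = 1/2 - x`, while the partial sums of the differentiated series are Euler's
approximations to `log Γ(x) + log x`. Since `ζ'(0) = -log (2π) / 2`, this is Lerch's formula
`ζ'(0,x) = log Γ(x) - log (2π) / 2`, and the product rule gives `L'(0,f)`.
-/

section LinearInterpolation

variable {E : Type*} [NormedAddCommGroup E] [NormedSpace ℝ E]

lemma norm_interpError_le_of_norm_deriv_sub_le {f f' : ℝ → E} {a b C x : ℝ} (hab : a ≤ b)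
    (hf : ∀ t ∈ Set.Icc a b, HasDerivWithinAt f (f' t) (Set.Icc a b) t)
    (hC : ∀ u ∈ Set.Icc a b, ∀ v ∈ Set.Icc a b, ‖f' u - f' v‖ ≤ C)
    (hx : x ∈ Set.Icc (0 : ℝ) 1) :
    ‖f ((1 - x) * a + x * b) - ((1 - x) • f a + x • f b)‖ ≤ C * (b - a) := by
  obtain ⟨hx0, hx1⟩ := hx
  have ha : a ∈ Set.Icc a b := Set.left_mem_Icc.2 hab
  have hb : b ∈ Set.Icc a b := Set.right_mem_Icc.2 hab
  have hmaps : Set.MapsTo (fun t => (1 - x) * a + x * t) (Set.Icc a b) (Set.Icc a b) :=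
    fun t ht => (convex_Icc a b) ha ht (by linarith) hx0 (by ring)
  -- The error is differentiated with respect to the right end point of the interval.
  have hderiv : ∀ t ∈ Set.Icc a b, HasDerivWithinAt
      (fun t => f ((1 - x) * a + x * t) - ((1 - x) • f a + x • f t))
      (x • (f' ((1 - x) * a + x * t) - f' t)) (Set.Icc a b) t := by
    intro t ht
    have hinner : HasDerivWithinAt (fun t => (1 - x) * a + x * t) x (Set.Icc a b) t := by
      simpa using ((hasDerivAt_id t).const_mul x).const_add ((1 - x) * a) |>.hasDerivWithinAt
    rw [smul_sub]
    exact ((hf _ (hmaps ht)).scomp t hinner hmaps).sub (((hf t ht).const_smul x).const_add _)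
  have hbound : ∀ t ∈ Set.Icc a b, ‖x • (f' ((1 - x) * a + x * t) - f' t)‖ ≤ C := by
    intro t ht
    rw [norm_smul, Real.norm_of_nonneg hx0]
    exact (mul_le_of_le_one_left (norm_nonneg _) hx1).trans (hC _ (hmaps ht) t ht)
  have hzero : f ((1 - x) * a + x * a) - ((1 - x) • f a + x • f a) = 0 := by
    rw [← add_smul, ← add_mul, sub_add_cancel, one_mul, one_smul, sub_self]
  simpa only [hzero, sub_zero, Real.norm_of_nonneg (sub_nonneg.2 hab)] using
    (convex_Icc a b).norm_image_sub_le_of_norm_hasDerivWithin_le hderiv hbound ha hb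

lemma norm_interpError_le_of_norm_deriv_deriv_le {f f' f'' : ℝ → E} {a b C x : ℝ} (hab : a ≤ b)
    (hf : ∀ t ∈ Set.Icc a b, HasDerivWithinAt f (f' t) (Set.Icc a b) t)
    (hf' : ∀ t ∈ Set.Icc a b, HasDerivWithinAt f' (f'' t) (Set.Icc a b) t)
    (hC : ∀ t ∈ Set.Icc a b, ‖f'' t‖ ≤ C) (hx : x ∈ Set.Icc (0 : ℝ) 1) :
    ‖f ((1 - x) * a + x * b) - ((1 - x) • f a + x • f b)‖ ≤ C * (b - a) ^ 2 := by
  have hC0 : 0 ≤ C := (norm_nonneg _).trans (hC a (Set.left_mem_Icc.2 hab))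
  have hosc : ∀ u ∈ Set.Icc a b, ∀ v ∈ Set.Icc a b, ‖f' u - f' v‖ ≤ C * (b - a) := by
    intro u hu v hv
    refine ((convex_Icc a b).norm_image_sub_le_of_norm_hasDerivWithin_le hf' hC hv hu).trans ?_
    exact mul_le_mul_of_nonneg_left (Real.dist_le_of_mem_Icc hu hv) hC0
  simpa only [pow_two, mul_assoc] using norm_interpError_le_of_norm_deriv_sub_le hab hf hosc hx

end LinearInterpolation

lemma hasSum_deriv_of_summableLocallyUniformlyOn {ι E : Type*} [NormedAddCommGroup E]
    [NormedSpace ℂ E] [CompleteSpace E] {f : ι → ℂ → E} {U : Set ℂ} {z : ℂ} (hU : IsOpen U)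
    (hsum : SummableLocallyUniformlyOn f U) (hf : ∀ i, DifferentiableOn ℂ (f i) U) (hz : z ∈ U) :
    HasSum (fun i => deriv (f i) z) (deriv (fun w => ∑' i, f i w) z) := by
  have hlim := (hasSumLocallyUniformlyOn_iff_tendstoLocallyUniformlyOn.1
    hsum.hasSumLocallyUniformlyOn).deriv
    (.of_forall fun t => DifferentiableOn.fun_sum fun i _ => hf i) hU
  refine (hlim.tendsto_at hz).congr fun t => ?_
  exact deriv_fun_sum fun i _ => (hf i).differentiableAt (hU.mem_nhds hz)

lemma hasDerivAt_ofReal_cpow_neg {t : ℝ} (ht : 0 < t) (s : ℂ) :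
    HasDerivAt (fun t : ℝ => (t : ℂ) ^ (-s)) (-s * (t : ℂ) ^ (-(s + 1))) t := by
  have h := (hasDerivAt_id (t : ℂ)).cpow_const (c := -s) (.inl (by simpa using ht))
  rw [neg_add']
  simpa using h.comp_ofReal

lemma hasDerivAt_cpow_neg {c : ℂ} (hc : c ≠ 0) (s : ℂ) :
    HasDerivAt (fun s => c ^ (-s)) (-(c ^ (-s) * Complex.log c)) s := by
  simpa using (hasDerivAt_neg s).const_cpow (c := c) (.inl hc)

/-- The error at `a + x` of the linear interpolation of `t ↦ t⁻ˢ` between `a` and `a + 1`;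
summed over `a = 1, 2, …` it continues `ζ(s,x) - ζ(s)` to `re s > -1`. -/
noncomputable def cpowInterpError (x a : ℝ) (s : ℂ) : ℂ :=
  ((a + x : ℝ) : ℂ) ^ (-s) - ((1 - x) * (a : ℂ) ^ (-s) + x * ((a + 1 : ℝ) : ℂ) ^ (-s))

section CpowInterpError

variable {x a : ℝ}

lemma cpowInterpError_zero (x a : ℝ) : cpowInterpError x a 0 = 0 := by
  simp [cpowInterpError]

lemma norm_cpowInterpError_le (hx : x ∈ Set.Icc (0 : ℝ) 1) (ha : 0 < a) {s : ℂ} (hs : -2 ≤ s.re) :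
    ‖cpowInterpError x a s‖ ≤ ‖s‖ * ‖s + 1‖ * a ^ (-(s.re + 2)) := by
  have hpos : ∀ t ∈ Set.Icc a (a + 1), 0 < t := fun t ht => ha.trans_le ht.1
  have hbound : ∀ t ∈ Set.Icc a (a + 1), ‖-s * (-(s + 1) * (t : ℂ) ^ (-(s + 1 + 1)))‖ ≤
      ‖s‖ * ‖s + 1‖ * a ^ (-(s.re + 2)) := by
    intro t ht
    rw [norm_mul, norm_mul, norm_neg, norm_neg, ← mul_assoc,
      Complex.norm_cpow_eq_rpow_re_of_pos (hpos t ht), add_assoc s, one_add_one_eq_two,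
      Complex.neg_re, Complex.add_re, Complex.re_ofNat]
    exact mul_le_mul_of_nonneg_left
      (Real.rpow_le_rpow_of_nonpos ha ht.1 (by linarith)) (by positivity)
  have h := norm_interpError_le_of_norm_deriv_deriv_le (by linarith : a ≤ a + 1)
    (fun t ht => (hasDerivAt_ofReal_cpow_neg (hpos t ht) s).hasDerivWithinAt)
    (fun t ht => ((hasDerivAt_ofReal_cpow_neg (hpos t ht) (s + 1)).const_mul _).hasDerivWithinAt)
    hbound hx
  rw [show (1 - x) * a + x * (a + 1) = a + x by ring, add_sub_cancel_left, one_pow, mul_one] at h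
  simpa [cpowInterpError] using h

lemma hasDerivAt_cpowInterpError (hx : 0 ≤ x) (ha : 0 < a) (s : ℂ) :
    HasDerivAt (cpowInterpError x a)
      (-(((a + x : ℝ) : ℂ) ^ (-s) * Complex.log (a + x : ℝ)) -
        ((1 - x) * -((a : ℂ) ^ (-s) * Complex.log a) +
          x * -(((a + 1 : ℝ) : ℂ) ^ (-s) * Complex.log (a + 1 : ℝ)))) s := by
  have hderiv {t : ℝ} (ht : 0 < t) := hasDerivAt_cpow_neg (Complex.ofReal_ne_zero.2 ht.ne') s
  exact (hderiv (by positivity)).sub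
    (((hderiv ha).const_mul _).add ((hderiv (by positivity)).const_mul _))

lemma deriv_cpowInterpError_zero (hx : 0 ≤ x) (ha : 0 < a) :
    deriv (cpowInterpError x a) 0 =
      ((1 - x) * Real.log a + x * Real.log (a + 1) - Real.log (a + x) : ℝ) := by
  rw [(hasDerivAt_cpowInterpError hx ha 0).deriv]
  simp only [neg_zero, Complex.cpow_zero, one_mul]
  rw [← Complex.ofReal_log (by positivity), ← Complex.ofReal_log ha.le,
    ← Complex.ofReal_log (by positivity)]
  push_cast
  ring

lemma summableLocallyUniformlyOn_cpowInterpError (hx : x ∈ Set.Icc (0 : ℝ) 1) :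
    SummableLocallyUniformlyOn (fun (n : ℕ) s => cpowInterpError x (n + 1) s)
      {s : ℂ | -1 < s.re} := by
  refine SummableLocallyUniformlyOn_of_locally_bounded (Complex.isOpen_re_gt (-1)) ?_
  intro K hK hKc
  rcases K.eq_empty_or_nonempty with rfl | hKne
  · exact ⟨0, summable_zero, by simp⟩
  obtain ⟨z, hzK, hz⟩ := hKc.exists_isMinOn hKne Complex.continuous_re.continuousOn
  obtain ⟨M, hM⟩ := hKc.exists_bound_of_continuousOn
    (f := fun s : ℂ => ‖s‖ * ‖s + 1‖) (by fun_prop)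
  have hz1 : -1 < z.re := hK hzK
  refine ⟨fun n => M * ((n : ℝ) + 1) ^ (-(z.re + 2)), ?_, fun n s hs => ?_⟩
  · have h := Real.summable_nat_rpow.2 (show -(z.re + 2) < -1 by linarith)
    simpa using ((summable_nat_add_iff 1).2 h).mul_left M
  · have hs1 : -1 < s.re := hK hs
    have hzs : z.re ≤ s.re := hz hs
    calc ‖cpowInterpError x (n + 1) s‖
        ≤ ‖s‖ * ‖s + 1‖ * ((n : ℝ) + 1) ^ (-(s.re + 2)) :=
          norm_cpowInterpError_le hx (by positivity) (by linarith)
      _ ≤ M * ((n : ℝ) + 1) ^ (-(z.re + 2)) := by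
          refine mul_le_mul ((Real.le_norm_self _).trans (hM s hs)) ?_ (by positivity)
            ((norm_nonneg _).trans (hM s hs))
          exact Real.rpow_le_rpow_of_exponent_le (by simp) (by linarith)

lemma differentiableAt_cpowInterpError_nat_add_one (hx : 0 ≤ x) (n : ℕ) (s : ℂ) :
    DifferentiableAt ℂ (cpowInterpError x (n + 1)) s :=
  (hasDerivAt_cpowInterpError hx n.cast_add_one_pos s).differentiableAt

lemma differentiableOn_tsum_cpowInterpError (hx : x ∈ Set.Icc (0 : ℝ) 1) :
    DifferentiableOn ℂ (fun s => ∑' n : ℕ, cpowInterpError x (n + 1) s) {s : ℂ | -1 < s.re} :=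
  (summableLocallyUniformlyOn_cpowInterpError hx).differentiableOn (Complex.isOpen_re_gt (-1))
    fun n s _ => differentiableAt_cpowInterpError_nat_add_one hx.1 n s

end CpowInterpError

section HurwitzZetaAtZero

variable {x : ℝ}

lemma hasSum_cpowInterpError (hx : x ∈ Set.Ioc (0 : ℝ) 1) {s : ℂ} (hs : 1 < s.re) :
    HasSum (fun n : ℕ => cpowInterpError x (n + 1) s)
      (hurwitzZeta x s - riemannZeta s - (x : ℂ) ^ (-s) + x) := by
  have hhurwitz : HasSum (fun n : ℕ => ((n + 1 + x : ℝ) : ℂ) ^ (-s))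
      (hurwitzZeta x s - (x : ℂ) ^ (-s)) := by
    have h := (hasSum_nat_add_iff' 1).2
      (hasSum_hurwitzZeta_of_one_lt_re (Set.Ioc_subset_Icc_self hx) hs)
    simpa [Complex.cpow_neg] using h
  have hzeta : HasSum (fun n : ℕ => ((n + 1 : ℝ) : ℂ) ^ (-s)) (riemannZeta s) := by
    have h := hasSum_hurwitzZeta_of_one_lt_re (a := 1) (by simp) hs
    rw [AddCircle.coe_period, hurwitzZeta_zero] at h
    simpa [Complex.cpow_neg] using h
  have hzeta_tail : HasSum (fun n : ℕ => ((n + 1 + 1 : ℝ) : ℂ) ^ (-s)) (riemannZeta s - 1) := by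
    simpa using (hasSum_nat_add_iff' 1).2 hzeta
  have h := hhurwitz.sub ((hzeta.mul_left (1 - (x : ℂ))).add (hzeta_tail.mul_left (x : ℂ)))
  convert! h using 1
  ring

theorem hurwitzZeta_sub_riemannZeta_eq_tsum (hx : x ∈ Set.Ioc (0 : ℝ) 1) {s : ℂ}
    (hs : -1 < s.re) :
    hurwitzZeta x s - riemannZeta s =
      (x : ℂ) ^ (-s) - x + ∑' n : ℕ, cpowInterpError x (n + 1) s := by
  have hlhs : Differentiable ℂ fun s => hurwitzZeta x s - riemannZeta s := by
    simpa only [hurwitzZeta_zero] using differentiable_hurwitzZeta_sub_hurwitzZeta x 0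
  have hpow : Differentiable ℂ fun s : ℂ => (x : ℂ) ^ (-s) - x := fun s =>
    (hasDerivAt_cpow_neg (Complex.ofReal_ne_zero.2 hx.1.ne') s).differentiableAt.sub_const _
  have hseries := differentiableOn_tsum_cpowInterpError (Set.Ioc_subset_Icc_self hx)
  have hnear : ∀ᶠ s in 𝓝 (2 : ℂ), 1 < s.re :=
    (Complex.isOpen_re_gt 1).mem_nhds (by simp)
  refine AnalyticOnNhd.eqOn_of_preconnected_of_eventuallyEq
    (hlhs.differentiableOn.analyticOnNhd (Complex.isOpen_re_gt (-1)))
    ((hpow.differentiableOn.add hseries).analyticOnNhd (Complex.isOpen_re_gt (-1)))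
    (convex_halfSpace_re_gt (-1)).isPreconnected (z₀ := 2) (by simp; norm_num) ?_ hs
  filter_upwards [hnear] with s hs
  simp only [Pi.add_apply]
  rw [(hasSum_cpowInterpError hx hs).tsum_eq]
  ring

theorem hurwitzZeta_apply_zero (hx : x ∈ Set.Ioc (0 : ℝ) 1) : hurwitzZeta x 0 = 1 / 2 - x := by
  have h := hurwitzZeta_sub_riemannZeta_eq_tsum hx (s := 0) (by simp)
  simp only [neg_zero, Complex.cpow_zero, cpowInterpError_zero, tsum_zero, riemannZeta_zero] at h
  linear_combination h

lemma sum_range_log_interpError (x : ℝ) (N : ℕ) :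
    ∑ n ∈ range N, ((1 - x) * Real.log (n + 1) + x * Real.log (n + 1 + 1) - Real.log (n + 1 + x)) =
      Real.BohrMollerup.logGammaSeq x N + x * (Real.log (N + 1) - Real.log N) + Real.log x := by
  have hfactorial : ∑ n ∈ range N, Real.log (n + 1) = Real.log N.factorial := by
    rw [← prod_range_add_one_eq_factorial, Nat.cast_prod,
      Real.log_prod fun n _ => by positivity]
    simp
  have htelescope : ∑ n ∈ range N, (Real.log (n + 1 + 1) - Real.log (n + 1)) =
      Real.log (N + 1) := by
    simpa using sum_range_sub (fun n : ℕ => Real.log (n + 1)) N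
  have hsplit (n : ℕ) : (1 - x) * Real.log (n + 1) + x * Real.log (n + 1 + 1)
      - Real.log (n + 1 + x) = Real.log (n + 1)
        + x * (Real.log (n + 1 + 1) - Real.log (n + 1)) - Real.log (x + (n + 1 : ℕ)) := by
    rw [Nat.cast_succ, add_comm x]
    ring
  simp only [hsplit, sum_sub_distrib, sum_add_distrib, ← mul_sum]
  rw [← sum_sub_distrib, hfactorial, htelescope, Real.BohrMollerup.logGammaSeq, sum_range_succ']
  simp only [Nat.cast_zero, add_zero]
  ring

lemma tendsto_sum_range_log_interpError (hx : 0 < x) :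
    Tendsto (fun N : ℕ => ∑ n ∈ range N,
        ((1 - x) * Real.log (n + 1) + x * Real.log (n + 1 + 1) - Real.log (n + 1 + x)))
      atTop (𝓝 (Real.log (Real.Gamma x) + Real.log x)) := by
  have h := ((Real.BohrMollerup.tendsto_log_gamma hx).add
    (Real.tendsto_log_nat_add_one_sub_log.const_mul x)).add_const (Real.log x)
  rw [mul_zero, add_zero] at h
  exact h.congr fun N => (sum_range_log_interpError x N).symm

lemma deriv_tsum_cpowInterpError_zero (hx : x ∈ Set.Ioc (0 : ℝ) 1) :
    deriv (fun s => ∑' n : ℕ, cpowInterpError x (n + 1) s) 0 =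
      (Real.log (Real.Gamma x) + Real.log x : ℝ) := by
  have hsum := hasSum_deriv_of_summableLocallyUniformlyOn (Complex.isOpen_re_gt (-1))
    (summableLocallyUniformlyOn_cpowInterpError (Set.Ioc_subset_Icc_self hx))
    (fun n s _ =>
      (differentiableAt_cpowInterpError_nat_add_one hx.1.le n s).differentiableWithinAt)
    (show (0 : ℂ) ∈ {s : ℂ | -1 < s.re} by simp)
  simp only [fun n : ℕ => deriv_cpowInterpError_zero hx.1.le (n.cast_add_one_pos (α := ℝ))] at hsum
  refine tendsto_nhds_unique hsum.tendsto_sum_nat ?_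
  simp only [← Complex.ofReal_sum]
  exact (Complex.continuous_ofReal.tendsto _).comp (tendsto_sum_range_log_interpError hx.1)

theorem hasDerivAt_hurwitzZeta_zero (hx : x ∈ Set.Ioc (0 : ℝ) 1) :
    HasDerivAt (hurwitzZeta x)
      (Real.log (Real.Gamma x) - Real.log (2 * Real.pi) / 2 : ℝ) 0 := by
  have hzeta : HasDerivAt riemannZeta (-Real.log (2 * Real.pi) / 2 : ℝ) 0 := by
    convert! (differentiableAt_riemannZeta zero_ne_one).hasDerivAt using 1
    rw [deriv_riemannZeta_zero]
    push_cast [Complex.ofReal_log Real.two_pi_pos.le]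
    rfl
  have hpow : HasDerivAt (fun s : ℂ => (x : ℂ) ^ (-s) - x) (-Real.log x : ℝ) 0 := by
    simpa [Complex.ofReal_log hx.1.le] using
      (hasDerivAt_cpow_neg (Complex.ofReal_ne_zero.2 hx.1.ne') 0).sub_const (x : ℂ)
  have hseries : HasDerivAt (fun s => ∑' n : ℕ, cpowInterpError x (n + 1) s)
      (Real.log (Real.Gamma x) + Real.log x : ℝ) 0 := by
    rw [← deriv_tsum_cpowInterpError_zero hx]
    exact ((differentiableOn_tsum_cpowInterpError (Set.Ioc_subset_Icc_self hx)).differentiableAt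
      ((Complex.isOpen_re_gt (-1)).mem_nhds (by simp))).hasDerivAt
  have hexpansion : hurwitzZeta x =ᶠ[𝓝 0] fun s =>
      riemannZeta s + (((x : ℂ) ^ (-s) - x) + ∑' n : ℕ, cpowInterpError x (n + 1) s) := by
    filter_upwards [(Complex.isOpen_re_gt (-1)).mem_nhds (by simp : (0 : ℂ) ∈ _)] with s hs
    rw [← hurwitzZeta_sub_riemannZeta_eq_tsum hx hs, add_sub_cancel]
  convert! (hzeta.add (hpow.add hseries)).congr_of_eventuallyEq hexpansion using 1
  push_cast
  ring

end HurwitzZetaAtZero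

theorem deriv_L_at_zero_general (q : ℕ) (hq : 0 < q) (f : ℕ → ℂ) (L : ℂ → ℂ)
    (hL : ∀ s : ℂ, L s = (q : ℂ) ^ (-s) * ∑ a ∈ Finset.Icc 1 q,
        f a * hurwitzZeta (↑((a : ℝ) / q) : UnitAddCircle) s) :
    HasDerivAt L ((Real.log q / q) * ∑ a ∈ Finset.Icc 1 q, (a : ℂ) * f a +
      ∑ a ∈ Finset.Icc 1 q, f a * Real.log (Real.Gamma ((a : ℝ) / q)) -
      Real.log (2 * Real.pi * q) / 2 * ∑ a ∈ Finset.Icc 1 q, f a) 0 := by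
  have hq0 : (0 : ℝ) < q := Nat.cast_pos.2 hq
  have hmem : ∀ a ∈ Icc 1 q, (a : ℝ) / q ∈ Set.Ioc (0 : ℝ) 1 := by
    intro a ha
    obtain ⟨ha1, haq⟩ := mem_Icc.1 ha
    exact ⟨div_pos (Nat.cast_pos.2 ha1) hq0, (div_le_one hq0).2 (Nat.cast_le.2 haq)⟩
  have hpow := hasDerivAt_cpow_neg (Nat.cast_ne_zero.2 hq.ne' : (q : ℂ) ≠ 0) 0
  have hsum := HasDerivAt.fun_sum fun a ha =>
    (hasDerivAt_hurwitzZeta_zero (hmem a ha)).const_mul (f a)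
  have hvalue : ∑ a ∈ Icc 1 q, f a * hurwitzZeta (↑((a : ℝ) / q) : UnitAddCircle) 0 =
      ∑ a ∈ Icc 1 q, f a * (1 / 2 - ((a : ℝ) / q : ℝ)) :=
    sum_congr rfl fun a ha => by rw [hurwitzZeta_apply_zero (hmem a ha)]
  rw [funext hL]
  convert! hpow.mul hsum using 1
  rw [hvalue, Real.log_mul Real.two_pi_pos.ne' hq0.ne']
  simp only [neg_zero, Complex.cpow_zero, one_mul, mul_sum, ← sum_add_distrib, ← sum_sub_distrib]
  refine sum_congr rfl fun a _ => ?_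
  push_cast [Complex.ofReal_log hq0.le]
  ring

/-- If `f` is `q`-periodic with `∑_{a=1}^q f a = 0`, then for
`L(s,f) = q^{-s} ∑_{a=1}^q f a · ζ(s,a/q)` one has
`L'(0,f) = (log q / q) ∑_{a=1}^q a f a + ∑_{a=1}^q f a · log Γ(a/q)`. -/
theorem deriv_L_at_zero (q : ℕ) (hq : 0 < q) (f : ℕ → ℂ)
    (hper : ∀ n : ℕ, f (n + q) = f n)
    (hsum : ∑ a ∈ Finset.Icc 1 q, f a = 0)
    (L : ℂ → ℂ)
    (hL : ∀ s : ℂ, L s = (q : ℂ) ^ (-s) * ∑ a ∈ Finset.Icc 1 q,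
        f a * hurwitzZeta (↑((a : ℝ) / q) : UnitAddCircle) s) :
    deriv L 0 = (Real.log q / q) * ∑ a ∈ Finset.Icc 1 q, (a : ℂ) * f a +
      ∑ a ∈ Finset.Icc 1 q, f a * Real.log (Real.Gamma ((a : ℝ) / q)) := by
  simpa [hsum] using (deriv_L_at_zero_general q hq f L hL).deriv
end

section
/- Let p > 5 be a prime. Assume the numbers log Γ(a/p), 1 ≤ a ≤ p-1, are linearly independent over Q̄. Let f_1, …, f_r (r ≥ 2) be Q̄-valued, odd, p-periodic, Q̄-linearly independent functions with f̂_j(p) = 0 and L(1,f_j) = 0 for all j. Then at most one of the numbers L'(1,f_1), …, L'(1,f_r) is algebraic. -/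
open Finset Filter Topology

/-!
Lerch's formula expresses `ζ'(0, x)` through `log Γ(x)`, so for a function `h` on `ZMod N` with
mean zero and `L(0, h) = 0` the value `L'(0, h)` is `∑ b, h b * log Γ(b / N)`. The functional
equation of an odd `Φ` with `L(1, Φ) = 0` carries this to `s = 1`: up to a nonzero constant,
`L'(1, Φ)` is the combination of the `log Γ(b / N)` with coefficients the Fourier transform of `Φ`.
Since the Fourier transform is injective and preserves algebraicity, linear independence of the
functions passes to their `L'(1, ·)`, and two algebraic numbers are never linearly independent
over the algebraic numbers.
-/

lemma norm_image_sub_sub_smul_le_of_norm_hasDerivWithin_le {𝕜 E : Type*} [RCLike 𝕜]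
    [NormedAddCommGroup E] [NormedSpace 𝕜 E] {f f' f'' : 𝕜 → E} {S : Set 𝕜} {a y : 𝕜} {C : ℝ}
    (hf : ∀ z ∈ S, HasDerivWithinAt f (f' z) S z) (hf' : ∀ z ∈ S, HasDerivWithinAt f' (f'' z) S z)
    (hC : ∀ z ∈ S, ‖f'' z‖ ≤ C) (hS : Convex ℝ S) (ha : a ∈ S) (hy : y ∈ S) :
    ‖f y - f a - (y - a) • f' a‖ ≤ C * ‖y - a‖ ^ 2 := by
  have hC0 : 0 ≤ C := (norm_nonneg _).trans (hC a ha)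
  set T := S ∩ Metric.closedBall a ‖y - a‖
  have hTS : T ⊆ S := Set.inter_subset_left
  have hderiv : ∀ z ∈ T, HasDerivWithinAt (fun z => f z - (z - a) • f' a) (f' z - f' a) T z := by
    intro z hz
    simpa using ((hf z hz.1).mono hTS).fun_sub
      (((hasDerivWithinAt_id z T).sub_const a).smul_const (f' a))
  have hbound : ∀ z ∈ T, ‖f' z - f' a‖ ≤ C * ‖y - a‖ := by
    intro z hz
    calc ‖f' z - f' a‖ ≤ C * ‖z - a‖ :=
          hS.norm_image_sub_le_of_norm_hasDerivWithin_le hf' hC ha hz.1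
      _ ≤ C * ‖y - a‖ := by gcongr; exact mem_closedBall_iff_norm.1 hz.2
  have hmain := (hS.inter (convex_closedBall a _)).norm_image_sub_le_of_norm_hasDerivWithin_le
    hderiv hbound ⟨ha, Metric.mem_closedBall_self (norm_nonneg _)⟩
    ⟨hy, mem_closedBall_iff_norm.2 le_rfl⟩
  calc ‖f y - f a - (y - a) • f' a‖ = ‖f y - (y - a) • f' a - (f a - (a - a) • f' a)‖ := by
        rw [sub_self, zero_smul, sub_zero, sub_right_comm]
    _ ≤ C * ‖y - a‖ * ‖y - a‖ := hmain
    _ = C * ‖y - a‖ ^ 2 := by ring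

lemma norm_ofReal_cpow_sub_sub_le {a y : ℝ} (ha : 0 < a) (hay : a ≤ y) {c : ℂ} (hc : c.re ≤ 2) :
    ‖(y : ℂ) ^ c - (a : ℂ) ^ c - (y - a) * (c * (a : ℂ) ^ (c - 1))‖ ≤
      ‖c‖ * ‖c - 1‖ * a ^ (c.re - 2) * (y - a) ^ 2 := by
  have hderiv (c : ℂ) : ∀ t ∈ Set.Ici a, HasDerivWithinAt (fun t : ℝ => (t : ℂ) ^ c)
      (c * (t : ℂ) ^ (c - 1)) (Set.Ici a) t := by
    intro t ht
    have ht0 : (t : ℂ) ∈ Complex.slitPlane := Complex.ofReal_mem_slitPlane.2 (ha.trans_le ht)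
    simpa using ((hasDerivAt_id (t : ℂ)).cpow_const ht0).comp_ofReal.hasDerivWithinAt
  have hbound : ∀ t ∈ Set.Ici a,
      ‖c * ((c - 1) * (t : ℂ) ^ (c - 1 - 1))‖ ≤ ‖c‖ * ‖c - 1‖ * a ^ (c.re - 2) := by
    intro t ht
    have hre : (c - 1 - 1).re = c.re - 2 := by norm_num [sub_sub]
    rw [norm_mul, norm_mul, Complex.norm_cpow_eq_rpow_re_of_pos (ha.trans_le ht), hre, ← mul_assoc]
    gcongr ?_ * ?_
    exact Real.rpow_le_rpow_of_nonpos ha ht (by linarith)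
  have hTaylor := norm_image_sub_sub_smul_le_of_norm_hasDerivWithin_le (hderiv c)
    (fun t ht => (hderiv (c - 1) t ht).const_mul c) hbound (convex_Ici a)
    Set.self_mem_Ici (Set.mem_Ici.2 hay)
  simpa [Complex.real_smul] using hTaylor

/-- The error made at `y = n + x` by the linear extrapolation of `y ^ (-s)` from `y = n + 1` and
`y = n + 2`. It is of second order, so the series over `n`, which is a combination of Hurwitz zeta
functions for `1 < re s`, converges for `-1 < re s` and in particular at `0`. -/
noncomputable def lerchTerm (x : ℝ) (n : ℕ) (s : ℂ) : ℂ :=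
  (n + x : ℂ) ^ (-s) - (2 - x) * (n + 1 : ℂ) ^ (-s) + (1 - x) * (n + 2 : ℂ) ^ (-s)

section

variable {x : ℝ}

lemma norm_lerchTerm_le (hx : x ∈ Set.Ioc 0 1) (n : ℕ) {s : ℂ} (hs : -2 ≤ s.re) :
    ‖lerchTerm x n s‖ ≤ 6 * (‖s‖ * ‖s + 1‖) * (n + x) ^ (-s.re - 2) := by
  obtain ⟨hx0, hx1⟩ := hx
  set a : ℝ := n + x with ha_def
  have ha : 0 < a := by positivity
  set R : ℝ → ℂ := fun y => (y : ℂ) ^ (-s) - (a : ℂ) ^ (-s) - (y - a) * (-s * (a : ℂ) ^ (-s - 1))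
    with hR
  set M : ℝ := ‖s‖ * ‖s + 1‖ * a ^ (-s.re - 2) with hM
  have hRle : ∀ y, a ≤ y → ‖R y‖ ≤ M * (y - a) ^ 2 := by
    intro y hy
    have hs1 : ‖-s - 1‖ = ‖s + 1‖ := by rw [← neg_add', norm_neg]
    have h := norm_ofReal_cpow_sub_sub_le ha hy (c := -s) (by rw [Complex.neg_re]; linarith)
    rwa [norm_neg, hs1, Complex.neg_re] at h
  have hM0 : 0 ≤ M := by positivity
  have hterm : lerchTerm x n s = ((1 - x : ℝ) : ℂ) * R (n + 2) - ((2 - x : ℝ) : ℂ) * R (n + 1) := by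
    simp only [lerchTerm, hR, ha_def]
    push_cast
    ring
  calc ‖lerchTerm x n s‖ ≤ (1 - x) * ‖R (n + 2)‖ + (2 - x) * ‖R (n + 1)‖ := by
        rw [hterm]
        refine (norm_sub_le _ _).trans_eq ?_
        rw [norm_mul, norm_mul, Complex.norm_of_nonneg (by linarith),
          Complex.norm_of_nonneg (by linarith)]
    _ ≤ (1 - x) * (M * (n + 2 - a) ^ 2) + (2 - x) * (M * (n + 1 - a) ^ 2) := by
        gcongr <;> first | linarith | exact hRle _ (by linarith)
    _ = ((1 - x) * (2 - x) ^ 2 + (2 - x) * (1 - x) ^ 2) * M := by rw [ha_def]; ring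
    _ ≤ 6 * M := by gcongr; nlinarith
    _ = 6 * (‖s‖ * ‖s + 1‖) * a ^ (-s.re - 2) := by rw [hM]; ring

lemma rpow_le_rpow_add_rpow {a p q r : ℝ} (ha : 0 < a) (hpq : p ≤ q) (hqr : q ≤ r) :
    a ^ q ≤ a ^ p + a ^ r := by
  rcases le_total a 1 with h | h
  · exact (Real.rpow_le_rpow_of_exponent_ge ha h hpq).trans
      (le_add_of_nonneg_right (Real.rpow_nonneg ha.le r))
  · exact (Real.rpow_le_rpow_of_exponent_le h hqr).trans
      (le_add_of_nonneg_left (Real.rpow_nonneg ha.le p))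

lemma summable_natCast_add_rpow {p : ℝ} (hx : 0 ≤ x) (hp : p < -1) :
    Summable fun n : ℕ => (n + x : ℝ) ^ p := by
  refine ((Real.summable_one_div_nat_add_rpow x (-p)).2 (by linarith)).congr fun n => ?_
  rw [abs_of_nonneg (by positivity), Real.rpow_neg (by positivity), one_div, inv_inv]

lemma exists_summable_norm_lerchTerm_le (hx : x ∈ Set.Ioc 0 1) :
    ∃ u : ℕ → ℝ, Summable u ∧ ∀ n, ∀ s ∈ Metric.ball (1 : ℂ) (3 / 2), ‖lerchTerm x n s‖ ≤ u n := by
  refine ⟨fun n => 6 * (3 * 4) * ((n + x) ^ (-9 / 2 : ℝ) + (n + x) ^ (-3 / 2 : ℝ)),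
    ((summable_natCast_add_rpow hx.1.le (by norm_num)).add
      (summable_natCast_add_rpow hx.1.le (by norm_num))).mul_left _, fun n s hs => ?_⟩
  have hs1 : ‖s - 1‖ < 3 / 2 := mem_ball_iff_norm.1 hs
  have hre : |s.re - 1| < 3 / 2 := by simpa using (Complex.abs_re_le_norm (s - 1)).trans_lt hs1
  have hre' := abs_lt.1 hre
  have hnorm : ‖s‖ ≤ 3 := by
    calc ‖s‖ = ‖(s - 1) + 1‖ := by rw [sub_add_cancel]
      _ ≤ ‖s - 1‖ + 1 := norm_add_le_of_le le_rfl norm_one.le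
      _ ≤ 3 := by linarith
  have hnorm' : ‖s + 1‖ ≤ 4 := by
    calc ‖s + 1‖ ≤ ‖s‖ + 1 := norm_add_le_of_le le_rfl norm_one.le
      _ ≤ 4 := by linarith
  have hx0 := hx.1
  calc ‖lerchTerm x n s‖ ≤ 6 * (‖s‖ * ‖s + 1‖) * (n + x) ^ (-s.re - 2) :=
        norm_lerchTerm_le hx n (by linarith)
    _ ≤ 6 * (3 * 4) * ((n + x) ^ (-9 / 2 : ℝ) + (n + x) ^ (-3 / 2 : ℝ)) := by
        gcongr
        exact rpow_le_rpow_add_rpow (by positivity) (by linarith) (by linarith)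

lemma hasSum_lerchTerm (hx : x ∈ Set.Ioc 0 1) {s : ℂ} (hs : 1 < s.re) :
    HasSum (fun n => lerchTerm x n s)
      (HurwitzZeta.hurwitzZeta x s - HurwitzZeta.hurwitzZeta 0 s - (1 - x)) := by
  have hsum_x := HurwitzZeta.hasSum_hurwitzZeta_of_one_lt_re ⟨hx.1.le, hx.2⟩ hs
  have hsum_one : HasSum (fun n : ℕ => 1 / (n + 1 : ℂ) ^ s) (HurwitzZeta.hurwitzZeta 0 s) := by
    simpa [show ((1 : ℝ) : UnitAddCircle) = 0 from AddCircle.coe_period 1] using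
      HurwitzZeta.hasSum_hurwitzZeta_of_one_lt_re (a := 1) ⟨zero_le_one, le_rfl⟩ hs
  have hsum_two : HasSum (fun n : ℕ => 1 / (n + 2 : ℂ) ^ s) (HurwitzZeta.hurwitzZeta 0 s - 1) := by
    simpa [add_assoc, one_add_one_eq_two] using (hasSum_nat_add_iff' 1).2 hsum_one
  convert! (hsum_x.sub (hsum_one.mul_left (2 - x : ℂ))).add (hsum_two.mul_left (1 - x : ℂ)) using 1
  · simp only [lerchTerm, Complex.cpow_neg, one_div]
  · ring

lemma hasDerivAt_lerchTerm_zero (hx : 0 < x) (n : ℕ) :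
    HasDerivAt (lerchTerm x n)
      ((-Real.log (n + x) + (2 - x) * Real.log (n + 1) - (1 - x) * Real.log (n + 2) : ℝ) : ℂ)
      0 := by
  have hpow {y : ℝ} (hy : 0 < y) :
      HasDerivAt (fun s : ℂ => (y : ℂ) ^ (-s)) (-Real.log y : ℝ) 0 := by
    simpa [Complex.ofReal_log hy.le] using
      (hasDerivAt_neg (0 : ℂ)).const_cpow (Or.inl (Complex.ofReal_ne_zero.2 hy.ne'))
  have h := ((hpow (y := n + x) (by positivity)).fun_sub
    ((hpow (y := n + 1) (by positivity)).const_mul (2 - x : ℂ))).fun_add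
    ((hpow (y := n + 2) (by positivity)).const_mul (1 - x : ℂ))
  convert! h using 1
  · ext s
    simp [lerchTerm]
  · push_cast
    ring

lemma differentiable_lerchTerm (hx : 0 < x) (n : ℕ) : Differentiable ℂ (lerchTerm x n) := by
  have hpow {y : ℝ} (hy : 0 < y) : Differentiable ℂ fun s : ℂ => (y : ℂ) ^ (-s) :=
    differentiable_neg.const_cpow (Or.inl (Complex.ofReal_ne_zero.2 hy.ne'))
  have hpow_x := hpow (y := n + x) (by positivity)
  have hpow_one := hpow (y := n + 1) (by positivity)
  have hpow_two := hpow (y := n + 2) (by positivity)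
  push_cast at hpow_x hpow_one hpow_two
  unfold lerchTerm
  fun_prop

lemma sum_deriv_lerchTerm_zero (hx : 0 < x) (N : ℕ) :
    ∑ n ∈ range (N + 1), deriv (lerchTerm x n) 0 =
      ((Real.BohrMollerup.logGammaSeq x N - (2 - x) * Real.BohrMollerup.logGammaSeq 1 N +
        (1 - x) * Real.BohrMollerup.logGammaSeq 2 N : ℝ) : ℂ) := by
  simp_rw [(hasDerivAt_lerchTerm_zero hx _).deriv, ← Complex.ofReal_sum,
    sum_sub_distrib, sum_add_distrib, ← mul_sum, sum_neg_distrib, Real.BohrMollerup.logGammaSeq,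
    add_comm x, add_comm (1 : ℝ), add_comm (2 : ℝ)]
  congr 1
  ring

theorem tendsto_sum_deriv_lerchTerm_zero (hx : 0 < x) :
    Tendsto (fun N : ℕ => ∑ n ∈ range (N + 1), deriv (lerchTerm x n) 0) atTop
      (𝓝 (Real.log (Real.Gamma x))) := by
  have hlim := ((Real.BohrMollerup.tendsto_log_gamma hx).sub
    ((Real.BohrMollerup.tendsto_log_gamma one_pos).const_mul (2 - x))).add
    ((Real.BohrMollerup.tendsto_log_gamma two_pos).const_mul (1 - x))
  simp only [Real.Gamma_one, Real.Gamma_two, Real.log_one, mul_zero, sub_zero, add_zero] at hlim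
  simp_rw [sum_deriv_lerchTerm_zero hx]
  exact (Complex.continuous_ofReal.tendsto _).comp hlim

theorem deriv_hurwitzZeta_zero (hx : x ∈ Set.Ioc 0 1) :
    deriv (HurwitzZeta.hurwitzZeta x) 0 =
      Real.log (Real.Gamma x) - Complex.log (2 * Real.pi) / 2 := by
  set U : Set ℂ := Metric.ball 1 (3 / 2)
  set F : ℂ → ℂ := fun s => HurwitzZeta.hurwitzZeta x s - HurwitzZeta.hurwitzZeta 0 s - (1 - x)
  have hU : IsOpen U := Metric.isOpen_ball
  have h0 : (0 : ℂ) ∈ U := by norm_num [U]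
  have h2 : (2 : ℂ) ∈ U := by norm_num [U, dist_eq_norm]
  obtain ⟨u, hu, hle⟩ := exists_summable_norm_lerchTerm_le hx
  have hdiff (n : ℕ) : DifferentiableOn ℂ (lerchTerm x n) U :=
    (differentiable_lerchTerm hx.1 n).differentiableOn
  have hF : Differentiable ℂ F :=
    (HurwitzZeta.differentiable_hurwitzZeta_sub_hurwitzZeta x 0).sub_const _
  have heq : Set.EqOn F (fun s => ∑' n, lerchTerm x n s) U := by
    refine (hF.differentiableOn.analyticOnNhd hU).eqOn_of_preconnected_of_eventuallyEq
      ((Complex.differentiableOn_tsum_of_summable_norm hu hdiff hU hle).analyticOnNhd hU)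
      (convex_ball _ _).isPreconnected h2 ?_
    filter_upwards [(isOpen_lt continuous_const Complex.continuous_re).mem_nhds
      (show 1 < (2 : ℂ).re by norm_num)] with s hs
    exact (hasSum_lerchTerm hx hs).tsum_eq.symm
  have hsum : HasSum (fun n => deriv (lerchTerm x n) 0) (deriv F 0) := by
    rw [(heq.eventuallyEq_of_mem (hU.mem_nhds h0)).deriv_eq]
    exact Complex.hasSum_deriv_of_summable_norm hu hdiff hU hle h0
  have hFderiv : deriv F 0 = Real.log (Real.Gamma x) :=
    tendsto_nhds_unique (hsum.tendsto_sum_nat.comp (tendsto_add_atTop_nat 1))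
      (tendsto_sum_deriv_lerchTerm_zero hx.1)
  have hsplit : deriv F 0 = deriv (HurwitzZeta.hurwitzZeta x) 0 - deriv riemannZeta 0 := by
    rw [deriv_sub_const_fun, deriv_fun_sub (HurwitzZeta.differentiableAt_hurwitzZeta x zero_ne_one)
      (HurwitzZeta.differentiableAt_hurwitzZeta 0 zero_ne_one), HurwitzZeta.hurwitzZeta_zero]
  linear_combination hFderiv - hsplit + deriv_riemannZeta_zero

end

/-- The factor in the functional equation `L(1 - s, Φ̂) = oddGammaFactor N s * L(s, Φ)` of an odd
function `Φ` on `ZMod N`, where `Φ̂` is the discrete Fourier transform without normalisation. -/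
noncomputable def oddGammaFactor (N : ℕ) (s : ℂ) : ℂ :=
  -2 * Complex.I * N ^ s * (2 * Real.pi) ^ (-s) * Complex.Gamma s * Complex.sin (Real.pi * s / 2)

lemma oddGammaFactor_one {N : ℕ} : oddGammaFactor N 1 = -(Complex.I * N / Real.pi) := by
  have hπ : (Real.pi : ℂ) ≠ 0 := Complex.ofReal_ne_zero.2 Real.pi_ne_zero
  simp only [oddGammaFactor, Complex.cpow_neg, Complex.cpow_one, Complex.Gamma_one, mul_one,
    Complex.sin_pi_div_two]
  field_simp

lemma differentiableAt_oddGammaFactor {N : ℕ} [NeZero N] {s : ℂ} (hs : ∀ n : ℕ, s ≠ -n) :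
    DifferentiableAt ℂ (oddGammaFactor N) s := by
  have hpow {a : ℂ} (ha : a ≠ 0) : Differentiable ℂ fun s : ℂ => a ^ s :=
    differentiable_id.const_cpow (Or.inl ha)
  have hN : DifferentiableAt ℂ (fun s : ℂ => (N : ℂ) ^ s) s := hpow (NeZero.ne _) s
  have hπ : DifferentiableAt ℂ (fun s : ℂ => (2 * Real.pi : ℂ) ^ (-s)) s :=
    ((hpow (mul_ne_zero two_ne_zero (Complex.ofReal_ne_zero.2 Real.pi_ne_zero))).comp
      differentiable_neg) s
  have hΓ := Complex.differentiableAt_Gamma s hs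
  unfold oddGammaFactor
  fun_prop

section

variable {N : ℕ} [NeZero N] {Φ : ZMod N → ℂ}

lemma deriv_hurwitzZeta_toAddCircle_zero (j : ZMod N) :
    deriv (HurwitzZeta.hurwitzZeta (ZMod.toAddCircle j)) 0 =
      Real.log (Real.Gamma (j.val / N)) - Complex.log (2 * Real.pi) / 2 := by
  have hN : (0 : ℝ) < N := Nat.cast_pos.2 (NeZero.pos N)
  rcases eq_or_ne j 0 with rfl | hj
  · -- `log Γ(0) = 0 = log Γ(1)`, because `Real.Gamma 0 = 0` and `Real.log 0 = 0`.
    simp [HurwitzZeta.hurwitzZeta_zero, deriv_riemannZeta_zero, neg_div]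
  · rw [ZMod.toAddCircle_apply]
    refine deriv_hurwitzZeta_zero ⟨div_pos (Nat.cast_pos.2 (ZMod.val_pos.2 hj)) hN, ?_⟩
    exact (div_le_one hN).2 (Nat.cast_le.2 j.val_lt.le)

theorem deriv_LFunction_zero (hΦ : ∑ j, Φ j = 0) :
    deriv (ZMod.LFunction Φ) 0 =
      -Complex.log N * ZMod.LFunction Φ 0 + ∑ j, Φ j * Real.log (Real.Gamma (j.val / N)) := by
  have hN : (N : ℂ) ≠ 0 := NeZero.ne _
  have hpow : HasDerivAt (fun s : ℂ => (N : ℂ) ^ (-s)) (-Complex.log N) 0 := by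
    simpa using (hasDerivAt_neg (0 : ℂ)).const_cpow (Or.inl hN)
  have hζ (j : ZMod N) := (HurwitzZeta.differentiableAt_hurwitzZeta (ZMod.toAddCircle j)
    zero_ne_one).hasDerivAt.const_mul (Φ j)
  have hL : HasDerivAt (ZMod.LFunction Φ) _ 0 := hpow.fun_mul (HasDerivAt.fun_sum fun j _ => hζ j)
  rw [hL.deriv]
  simp_rw [deriv_hurwitzZeta_toAddCircle_zero, mul_sub, sum_sub_distrib, ← sum_mul, hΦ]
  simp [ZMod.LFunction]

lemma LFunction_const_mul (a : ℂ) (Φ : ZMod N → ℂ) (s : ℂ) :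
    ZMod.LFunction (fun j => a * Φ j) s = a * ZMod.LFunction Φ s := by
  simp only [ZMod.LFunction, mul_assoc, ← mul_sum, mul_left_comm]

theorem LFunction_dft_one_sub_of_odd (hΦ : Φ.Odd) {s : ℂ} (hs : ∀ n : ℕ, s ≠ -n) :
    ZMod.LFunction (ZMod.dft Φ) (1 - s) = oddGammaFactor N s * ZMod.LFunction Φ s := by
  have hN : (N : ℂ) ≠ 0 := NeZero.ne _
  have hdft : ZMod.dft (ZMod.dft Φ) = fun j => -(N : ℂ) * Φ j := by
    simp [ZMod.dft_dft, hΦ _]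
  have hdft_neg : (ZMod.dft fun j => ZMod.dft Φ (-j)) = fun j => (N : ℂ) * Φ j := by
    simp [ZMod.dft_comp_neg, ZMod.dft_dft]
  set z : ℂ := Real.pi * s / 2
  have hsin : 2 * Complex.sin z =
      (Complex.exp (-(z * Complex.I)) - Complex.exp (z * Complex.I)) * Complex.I := by
    rw [Complex.two_sin, neg_mul]
  have hexp : Complex.exp (-(z * Complex.I)) - Complex.exp (z * Complex.I) =
      -2 * Complex.I * Complex.sin z := by
    linear_combination Complex.I * hsin +
      (Complex.exp (-(z * Complex.I)) - Complex.exp (z * Complex.I)) * Complex.I_sq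
  rw [oddGammaFactor, ZMod.LFunction_one_sub _ hs (Or.inl (ZMod.dft_odd_iff.2 hΦ).map_zero), hdft,
    hdft_neg, LFunction_const_mul, LFunction_const_mul, Complex.cpow_sub _ _ hN, Complex.cpow_one,
    show (Real.pi * Complex.I * s / 2 : ℂ) = z * Complex.I by ring,
    show (-Real.pi * Complex.I * s / 2 : ℂ) = -(z * Complex.I) by ring]
  field_simp
  linear_combination N ^ s * Complex.Gamma s * ZMod.LFunction Φ s * hexp

lemma ne_neg_natCast_of_re_pos {s : ℂ} (hs : 0 < s.re) (n : ℕ) : s ≠ -n := by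
  rintro rfl
  rw [Complex.neg_re, Complex.natCast_re, neg_pos] at hs
  exact hs.not_ge n.cast_nonneg

lemma LFunction_dft_zero_of_odd (hΦ : Φ.Odd) :
    ZMod.LFunction (ZMod.dft Φ) 0 = -(Complex.I * N / Real.pi) * ZMod.LFunction Φ 1 := by
  rw [← oddGammaFactor_one,
    ← LFunction_dft_one_sub_of_odd hΦ (ne_neg_natCast_of_re_pos one_pos), sub_self]

lemma deriv_LFunction_dft_zero_of_odd (hΦ : Φ.Odd) (hone : ZMod.LFunction Φ 1 = 0) :
    deriv (ZMod.LFunction (ZMod.dft Φ)) 0 =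
      Complex.I * N / Real.pi * deriv (ZMod.LFunction Φ) 1 := by
  have heq : (fun s => ZMod.LFunction (ZMod.dft Φ) (1 - s)) =ᶠ[𝓝 1]
      fun s => oddGammaFactor N s * ZMod.LFunction Φ s := by
    filter_upwards [(isOpen_lt continuous_const Complex.continuous_re).mem_nhds
      (show 0 < (1 : ℂ).re from one_pos)] with s hs
    exact LFunction_dft_one_sub_of_odd hΦ (ne_neg_natCast_of_re_pos hs)
  have h := heq.deriv_eq
  rw [deriv_comp_const_sub, sub_self,
    deriv_fun_mul (differentiableAt_oddGammaFactor (ne_neg_natCast_of_re_pos one_pos))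
      (ZMod.differentiable_LFunction_of_sum_zero hΦ.sum_eq_zero 1),
    hone, mul_zero, zero_add, oddGammaFactor_one] at h
  linear_combination -h

theorem deriv_LFunction_one_of_odd (hΦ : Φ.Odd) (hone : ZMod.LFunction Φ 1 = 0) :
    deriv (ZMod.LFunction Φ) 1 = -(Real.pi * Complex.I / N) *
      ∑ b, ZMod.dft Φ b * Real.log (Real.Gamma (b.val / N)) := by
  have hN : (N : ℂ) ≠ 0 := NeZero.ne _
  have hπ : (Real.pi : ℂ) ≠ 0 := Complex.ofReal_ne_zero.2 Real.pi_ne_zero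
  have hdual : ∑ b, ZMod.dft Φ b * Real.log (Real.Gamma (b.val / N)) =
      Complex.I * N / Real.pi * deriv (ZMod.LFunction Φ) 1 := by
    rw [← deriv_LFunction_dft_zero_of_odd hΦ hone,
      deriv_LFunction_zero (ZMod.dft_odd_iff.2 hΦ).sum_eq_zero, LFunction_dft_zero_of_odd hΦ, hone,
      mul_zero, mul_zero, zero_add]
  rw [hdual]
  field_simp
  linear_combination deriv (ZMod.LFunction Φ) 1 * Complex.I_sq

end

section

variable {F E : Type*} [Field F] [Field E] [Algebra F E] {ι : Type*}

lemma subsingleton_isAlgebraic_of_linearIndependent {v : ι → E}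
    (hv : LinearIndependent (algebraicClosure F E) v) :
    {i | IsAlgebraic F (v i)}.Subsingleton := by
  intro i hi j hj
  by_contra hij
  have hdiv : v j / v i ∈ algebraicClosure F E :=
    div_mem (mem_algebraicClosure_iff.2 hj) (mem_algebraicClosure_iff.2 hi)
  exact (linearIndepOn_pair_iff v hij (hv.ne_zero i)).1 (hv.linearIndepOn _)
    ⟨_, hdiv⟩ (div_mul_cancel₀ _ (hv.ne_zero i))

lemma linearIndepOn_algebraicClosure {V : Type*} [AddCommGroup V] [Module E V] {s : Finset ι}
    {v : ι → V} (h : ∀ c : ι → E, (∀ i, IsAlgebraic F (c i)) → ∑ i ∈ s, c i • v i = 0 →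
      ∀ i ∈ s, c i = 0) :
    LinearIndepOn (algebraicClosure F E) v s :=
  linearIndepOn_finset_iff.2 fun g hg i hi =>
    Subtype.ext (h (fun i => g i) (fun i => mem_algebraicClosure_iff.1 (g i).2) hg i hi)

lemma linearIndependent_algebraicClosure [Fintype ι] {V : Type*} [AddCommGroup V] [Module E V]
    {v : ι → V} (h : ∀ c : ι → E, (∀ i, IsAlgebraic F (c i)) → ∑ i, c i • v i = 0 →
      ∀ i, c i = 0) :
    LinearIndependent (algebraicClosure F E) v := by
  have hv : LinearIndepOn (algebraicClosure F E) v (Finset.univ : Finset ι) :=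
    linearIndepOn_algebraicClosure fun c hc hsum i _ => h c hc hsum i
  rwa [Finset.coe_univ, linearIndepOn_univ_iff] at hv

end

section

variable {N : ℕ} [NeZero N] {K : IntermediateField ℚ ℂ}

lemma dft_apply_mem (hK : ∀ k : ZMod N, ZMod.stdAddChar k ∈ K) {Φ : ZMod N → ℂ}
    (hΦ : ∀ j, Φ j ∈ K) (k : ZMod N) : ZMod.dft Φ k ∈ K := by
  rw [ZMod.dft_apply]
  exact sum_mem fun j _ => mul_mem (hK _) (hΦ j)

lemma stdAddChar_mem_algebraicClosure (k : ZMod N) :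
    ZMod.stdAddChar k ∈ algebraicClosure ℚ ℂ := by
  refine mem_algebraicClosure_iff.2 (IsAlgebraic.of_pow (NeZero.pos N) ?_)
  rw [← AddChar.map_nsmul_eq_pow, nsmul_eq_mul, CharP.cast_eq_zero, zero_mul,
    AddChar.map_zero_eq_one]
  exact isAlgebraic_one

lemma eq_zero_of_sum_dft_mul_eq_zero (hK : ∀ k : ZMod N, ZMod.stdAddChar k ∈ K)
    {γ : ZMod N → ℂ} (hγ : LinearIndepOn K γ {0}ᶜ)
    {Φ : ZMod N → ℂ} (hΦK : ∀ j, Φ j ∈ K) (hΦ : Φ.Odd) (hsum : ∑ b, ZMod.dft Φ b * γ b = 0) :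
    Φ = 0 := by
  have hdft_zero : ZMod.dft Φ 0 = 0 := (ZMod.dft_odd_iff.2 hΦ).map_zero
  rw [← coe_singleton, ← coe_compl, linearIndepOn_finset_iff] at hγ
  have hdft_ne : ∀ b ∈ ({0}ᶜ : Finset (ZMod N)),
      (⟨ZMod.dft Φ b, dft_apply_mem hK hΦK b⟩ : K) = 0 := by
    refine hγ _ ?_
    rwa [← sum_add_sum_compl {0}, sum_singleton, hdft_zero, zero_mul, zero_add] at hsum
  refine (LinearEquiv.map_eq_zero_iff ZMod.dft).1 (funext fun b => ?_)
  rcases eq_or_ne b 0 with rfl | hb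
  · exact hdft_zero
  · exact congrArg Subtype.val (hdft_ne b (by simpa using hb))

theorem linearIndependent_deriv_LFunction_one (hK : ∀ k : ZMod N, ZMod.stdAddChar k ∈ K)
    (hΓ : LinearIndepOn K (fun b : ZMod N => (Real.log (Real.Gamma (b.val / N)) : ℂ)) {0}ᶜ)
    {ι : Type*} {Φ : ι → ZMod N → ℂ} (hΦK : ∀ j a, Φ j a ∈ K) (hodd : ∀ j, (Φ j).Odd)
    (hindep : LinearIndependent K Φ) (hone : ∀ j, ZMod.LFunction (Φ j) 1 = 0) :
    LinearIndependent K fun j => deriv (ZMod.LFunction (Φ j)) 1 := by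
  rw [linearIndependent_iff'] at hindep ⊢
  intro s g hg
  refine hindep s g (eq_zero_of_sum_dft_mul_eq_zero hK hΓ (fun a => ?_) (fun a => ?_) ?_)
  · rw [Finset.sum_apply]
    exact sum_mem fun j _ => mul_mem (g j).2 (hΦK j a)
  · simp [hodd _ a]
  · have hN : (-(Real.pi * Complex.I / N) : ℂ) ≠ 0 := by simp [NeZero.ne N, Real.pi_ne_zero]
    refine (mul_eq_zero_iff_left hN).1 (Eq.trans ?_ hg)
    simp_rw [deriv_LFunction_one_of_odd (hodd _) (hone _), IntermediateField.smul_def, map_sum,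
      map_smul, Finset.sum_apply, Pi.smul_apply, smul_eq_mul, sum_mul, mul_sum]
    rw [sum_comm]
    refine sum_congr rfl fun j _ => sum_congr rfl fun b _ => ?_
    ring

lemma exists_eq_comp_intCast {α : Type*} {f : ℤ → α} (hf : Function.Periodic f (N : ℤ)) :
    ∃ Φ : ZMod N → α, f = Φ ∘ Int.cast := by
  refine ⟨fun a => f a.val, funext fun n => ?_⟩
  rw [Function.comp_apply, ZMod.val_intCast, Int.emod_def, mul_comm]
  exact (hf.sub_int_mul_eq _).symm

lemma eq_LFunction_of_eq_tsum {Φ : ZMod N → ℂ} (hΦ : ∑ j, Φ j = 0) {L : ℂ → ℂ}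
    (hL : Differentiable ℂ L)
    (hser : ∀ s : ℂ, 1 < s.re → L s = ∑' n : ℕ, Φ (n + 1) / ((n : ℂ) + 1) ^ s) :
    L = ZMod.LFunction Φ := by
  refine AnalyticOnNhd.eq_of_eventuallyEq (z₀ := (2 : ℂ))
    (hL.differentiableOn.analyticOnNhd isOpen_univ)
    ((ZMod.differentiable_LFunction_of_sum_zero hΦ).differentiableOn.analyticOnNhd isOpen_univ) ?_
  filter_upwards [(isOpen_lt continuous_const Complex.continuous_re).mem_nhds
    (show 1 < (2 : ℂ).re by norm_num)] with s hs
  rw [hser s hs, ZMod.LFunction_eq_LSeries Φ hs, LSeries,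
    (ZMod.LSeriesSummable_of_one_lt_re Φ hs).tsum_eq_zero_add, LSeries.term_zero, zero_add]
  exact tsum_congr fun n => by simp

theorem at_most_one_algebraic_deriv_general (hK : ∀ k : ZMod N, ZMod.stdAddChar k ∈ K)
    (hΓ : LinearIndepOn K (fun a : ℕ => (Real.log (Real.Gamma (a / N)) : ℂ))
      (Finset.Icc 1 (N - 1)))
    {ι : Type*} {f : ι → ℤ → ℂ} (hfK : ∀ j n, f j n ∈ K)
    (hper : ∀ j, Function.Periodic (f j) (N : ℤ)) (hodd : ∀ j, (f j).Odd)
    (hindep : LinearIndependent K f) {L : ι → ℂ → ℂ} (hLdiff : ∀ j, Differentiable ℂ (L j))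
    (hLser : ∀ j (s : ℂ), 1 < s.re → L j s = ∑' n : ℕ, f j (n + 1) / ((n : ℂ) + 1) ^ s)
    (hLone : ∀ j, L j 1 = 0) :
    LinearIndependent K fun j => deriv (L j) 1 := by
  choose Φ hΦ using fun j => exists_eq_comp_intCast (hper j)
  obtain rfl : f = fun j => Φ j ∘ Int.cast := funext hΦ
  have hΦK (j) (a : ZMod N) : Φ j a ∈ K := by
    obtain ⟨n, rfl⟩ := ZMod.intCast_surjective a
    exact hfK j n
  have hΦodd (j) : (Φ j).Odd := fun a => by
    obtain ⟨n, rfl⟩ := ZMod.intCast_surjective a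
    simpa using hodd j n
  have hL (j) : L j = ZMod.LFunction (Φ j) :=
    eq_LFunction_of_eq_tsum (hΦodd j).sum_eq_zero (hLdiff j) (by simpa using hLser j)
  have hΦindep : LinearIndependent K Φ :=
    .of_comp (LinearMap.funLeft K ℂ ((↑) : ℤ → ZMod N)) hindep
  have hΓ' : LinearIndepOn K (fun b : ZMod N => (Real.log (Real.Gamma (b.val / N)) : ℂ)) {0}ᶜ := by
    refine LinearIndepOn.comp_of_image (hΓ.mono ?_) (ZMod.val_injective N).injOn
    rintro _ ⟨b, hb, rfl⟩
    exact Finset.mem_coe.2 (Finset.mem_Icc.2 ⟨ZMod.val_pos.2 hb, Nat.le_sub_one_of_lt b.val_lt⟩)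
  simp only [hL] at hLone ⊢
  exact linearIndependent_deriv_LFunction_one hK hΓ' hΦK hΦodd hΦindep hLone

end

/-- Theorem 1: let `p > 5` be prime, assume the Q̄-linear independence of
`{log Γ(a/p) : 1 ≤ a ≤ p-1}`, and let `f_1, …, f_r` (`r ≥ 2`) be Q̄-valued, odd,
`p`-periodic, Q̄-linearly independent functions with `∑_{a=1}^p f_j a = 0` and
`L(1,f_j) = 0`. Then at most one of `L'(1,f_1), …, L'(1,f_r)` is algebraic. -/
theorem at_most_one_algebraic_deriv (p : ℕ) (hp : p.Prime) (hp5 : 5 < p)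
    (hconj : ∀ c : ℕ → ℂ, (∀ a, IsAlgebraic ℚ (c a)) →
      (∑ a ∈ Finset.Icc 1 (p - 1),
        c a * (Real.log (Real.Gamma ((a : ℝ) / p)) : ℂ)) = 0 →
      ∀ a ∈ Finset.Icc 1 (p - 1), c a = 0)
    (r : ℕ) (hr : 2 ≤ r)
    (f : Fin r → ℤ → ℂ)
    (halg : ∀ j (n : ℤ), IsAlgebraic ℚ (f j n))
    (hper : ∀ j (n : ℤ), f j (n + p) = f j n)
    (hodd : ∀ j (n : ℤ), f j (p - n) = -f j n)
    (hsum : ∀ j, ∑ a ∈ Finset.Icc 1 p, f j a = 0)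
    (hindep : ∀ α : Fin r → ℂ, (∀ j, IsAlgebraic ℚ (α j)) →
      (∀ n : ℤ, ∑ j, α j * f j n = 0) → ∀ j, α j = 0)
    (L : Fin r → ℂ → ℂ)
    (hLdiff : ∀ j, Differentiable ℂ (L j))
    (hLser : ∀ j (s : ℂ), 1 < s.re → L j s = ∑' n : ℕ, f j (n + 1) / ((n : ℂ) + 1) ^ s)
    (hLone : ∀ j, L j 1 = 0) :
    {j : Fin r | IsAlgebraic ℚ (deriv (L j) 1)}.ncard ≤ 1 := by
  have : NeZero p := ⟨hp.ne_zero⟩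
  have hf : LinearIndependent (algebraicClosure ℚ ℂ) f :=
    linearIndependent_algebraicClosure fun α hα h =>
      hindep α hα fun n => by simpa using congrFun h n
  have hL : LinearIndependent (algebraicClosure ℚ ℂ) fun j => deriv (L j) 1 :=
    at_most_one_algebraic_deriv_general stdAddChar_mem_algebraicClosure
      (linearIndepOn_algebraicClosure hconj) (fun j n => mem_algebraicClosure_iff.2 (halg j n)) hper
      (fun j n => by rw [← hodd, ← hper j (-n), neg_add_eq_sub]) hf hLdiff hLser hLone
  exact Set.ncard_le_one_iff_subsingleton.2 (subsingleton_isAlgebraic_of_linearIndependent hL)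
end
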